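/- Fix an even smooth function $\tilde\psi : \mathbb{R} \to [0,1]$ supported in $[-3/2, 3/2]$ and equal to $1$ on $[-5/4, 5/4]$; set $\psi_j(z) := \tilde\psi(|z|/2^j) - \tilde\psi(|z|/2^{j-1})$, and define $\varphi_0(z) := \tilde\psi(|z|)$ and $\varphi_j := \psi_j$ for integers $j \ge 1$. Let $n > 1$ and let $f : \mathbb{R}^3 \times \mathbb{R}^3 \to [0,\infty)$ be measurable with $f \le A$ almost everywhere, $M_1 := \iint (1+|v|) f\,dx\,dv < \infty$ and $M_n := \iint (1+|v|)^n f\,dx\,dv < \infty$. Let $k \in \mathbb{Z}$, let $j_1, j_2$ be nonnegative integers, and let $K : \mathbb{R}^3 \to \mathbb{R}^3$ be measurable with $|K(y)| \le 2^{2k}(1 + 2^k |y|)^{-10}$ for all $y$. Define $E(x) := \int_{\mathbb{R}^3}\int_{\mathbb{R}^3} K(y)\, f(x-y, v)\, \varphi_{j_1}(\slashed v)\, \varphi_{j_2}(v)\,dy\,dv$, where $\slashed v := (v_1,v_2)$. Then there is a constant $C$ (depending only on $n$) such that for all $x$: $|E(x)| \le C \min\{ A\, 2^{-k + 2 j_1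 + j_2},\; 2^{2k - j_2} M_1,\; 2^{2k - n j_2} M_n \}$. -/

import Mathlib

open MeasureTheory Real Set
noncomputable section

abbrev E3 := EuclideanSpace ℝ (Fin 3)

/-- The radial Littlewood–Paley cutoffs `φ_j`: `φ_0(z) = ψ̃(|z|)` and, for `j ≥ 1`,
`φ_j(z) = ψ̃(|z|/2^j) - ψ̃(|z|/2^{j-1})`, here expressed as a function of `r = |z|`. -/
def vphi (ψ : ℝ → ℝ) (j : ℕ) (r : ℝ) : ℝ :=
  if j = 0 then ψ |r| else ψ (|r| / 2 ^ j) - ψ (|r| / 2 ^ (j - 1))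

/-!
The kernel satisfies both `‖K‖_∞ ≤ 2^{2k}` and, by scaling, `‖K‖_{L¹} ≲ 2^{2k} 2^{-3k} = 2^{-k}`.
Pairing the `L¹` bound with `f ≤ A` leaves the volume of the velocity support: there
`|v₁|, |v₂| ≲ 2^{j₁}` and `|v₃| ≲ 2^{j₂}`, which gives `2^{2j₁+j₂}`. Pairing the `L^∞` bound with
a moment uses that `1 + |v| ≳ 2^{j₂}` on the velocity support, so that the cutoff is dominated by
`2^m 2^{-m j₂} (1 + |v|)^m`.
-/

section Cutoff

variable {ψ : ℝ → ℝ}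

theorem abs_vphi_le_one (hψ : ∀ r, ψ r ∈ Icc (0 : ℝ) 1) (j : ℕ) (r : ℝ) : |vphi ψ j r| ≤ 1 := by
  unfold vphi
  split_ifs
  · exact abs_le.2 ⟨by linarith [(hψ |r|).1], (hψ |r|).2⟩
  · simpa using abs_sub_le_of_le_of_le (hψ _).1 (hψ _).2 (hψ _).1 (hψ _).2

theorem abs_le_of_vphi_ne_zero (hsupp : Function.support ψ ⊆ Icc (-(3 / 2)) (3 / 2))
    {j : ℕ} {r : ℝ} (h : vphi ψ j r ≠ 0) : |r| ≤ 3 / 2 * 2 ^ j := by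
  contrapose! h
  have eq_zero_of_lt {t : ℝ} (ht : 3 / 2 < t) : ψ t = 0 := by
    by_contra hne
    exact ht.not_ge (hsupp hne).2
  have outer : 3 / 2 < |r| / 2 ^ j := by rwa [lt_div_iff₀ (by positivity)]
  unfold vphi
  split_ifs with hj
  · exact eq_zero_of_lt (by simpa [hj] using outer)
  · have inner : |r| / 2 ^ j ≤ |r| / 2 ^ (j - 1) := by
      gcongr
      · exact one_le_two
      · exact j.sub_le 1
    rw [eq_zero_of_lt outer, eq_zero_of_lt (outer.trans_le inner), sub_zero]

theorem two_pow_le_of_vphi_ne_zero (hone : ∀ r : ℝ, |r| ≤ 5 / 4 → ψ r = 1)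
    {j : ℕ} {r : ℝ} (h : vphi ψ j r ≠ 0) : (2 : ℝ) ^ j ≤ 2 * (1 + |r|) := by
  cases j with
  | zero => linarith [abs_nonneg r, pow_zero (2 : ℝ)]
  | succ j =>
    contrapose! h
    have inner : |r| ≤ 2 ^ j := by linarith [pow_succ (2 : ℝ) j]
    have eq_one {i : ℕ} (hi : j ≤ i) : ψ (|r| / 2 ^ i) = 1 := by
      apply hone
      rw [abs_of_nonneg (by positivity), div_le_iff₀ (by positivity)]
      have : (2 : ℝ) ^ j ≤ 2 ^ i := pow_le_pow_right₀ one_le_two hi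
      linarith [abs_nonneg r]
    rw [vphi, if_neg j.succ_ne_zero, Nat.add_sub_cancel, eq_one j.le_succ, eq_one le_rfl, sub_self]

theorem abs_vphi_le_rpow (hψ : ∀ r, ψ r ∈ Icc (0 : ℝ) 1) (hone : ∀ r : ℝ, |r| ≤ 5 / 4 → ψ r = 1)
    {m : ℝ} (hm : 0 ≤ m) (j : ℕ) (r : ℝ) :
    |vphi ψ j r| ≤ 2 ^ m * 2 ^ (-(m * j)) * (1 + |r|) ^ m := by
  by_cases h : vphi ψ j r = 0
  · rw [h, abs_zero]
    positivity
  calc |vphi ψ j r| ≤ 1 := abs_vphi_le_one hψ j r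
    _ = ((2 : ℝ) ^ j) ^ m * 2 ^ (-(m * j)) := by
      rw [← rpow_natCast_mul zero_le_two, mul_comm (j : ℝ), ← rpow_add two_pos, add_neg_cancel,
        rpow_zero]
    _ ≤ (2 * (1 + |r|)) ^ m * 2 ^ (-(m * j)) := by
      gcongr
      exact two_pow_le_of_vphi_ne_zero hone h
    _ = 2 ^ m * 2 ^ (-(m * j)) * (1 + |r|) ^ m := by
      rw [mul_rpow zero_le_two (by positivity)]
      ring

end Cutoff

section CoordBox

variable {ι : Type*}

/-- The closed box centred at the origin of Euclidean space with half-side `a i` in the `i`-th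
coordinate direction; it is empty if some `a i` is negative. -/
def coordBox (a : ι → ℝ) : Set (EuclideanSpace ℝ ι) :=
  {v | ∀ i, |v i| ≤ a i}

theorem coordBox_eq_preimage (a : ι → ℝ) : coordBox a = WithLp.ofLp ⁻¹' Icc (-a) a := by
  ext v
  simp only [coordBox, mem_ofPred_eq, mem_preimage, mem_Icc, Pi.le_def, Pi.neg_apply, abs_le,
    forall_and]

theorem measurableSet_coordBox [Countable ι] (a : ι → ℝ) : MeasurableSet (coordBox a) := by
  rw [coordBox_eq_preimage]
  exact WithLp.measurable_ofLp 2 _ measurableSet_Icc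

variable [Fintype ι]

theorem volume_coordBox (a : ι → ℝ) :
    volume (coordBox a) = ∏ i, ENNReal.ofReal (2 * a i) := by
  rw [coordBox_eq_preimage, (PiLp.volume_preserving_ofLp ι).measure_preimage
    measurableSet_Icc.nullMeasurableSet, Real.volume_Icc_pi]
  simp only [Pi.neg_apply, sub_neg_eq_add, two_mul]

theorem volume_coordBox_ne_top (a : ι → ℝ) : volume (coordBox a) ≠ ⊤ := by
  rw [volume_coordBox]
  exact ENNReal.prod_ne_top fun _ _ => ENNReal.ofReal_ne_top

theorem volume_real_coordBox {a : ι → ℝ} (ha : ∀ i, 0 ≤ a i) :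
    volume.real (coordBox a) = ∏ i, 2 * a i := by
  rw [Measure.real, volume_coordBox, ENNReal.toReal_prod]
  exact Finset.prod_congr rfl fun i _ => ENNReal.toReal_ofReal (mul_nonneg zero_le_two (ha i))

end CoordBox

section VelocityCutoff

variable {ψ : ℝ → ℝ}

/-- The velocity localization `φ_{j₁}(v̸) φ_{j₂}(v)`, where `v̸ = (v₁, v₂)` is the planar velocity
(the coordinates `v 0` and `v 1`). -/
def velocityCutoff (ψ : ℝ → ℝ) (j₁ j₂ : ℕ) (v : E3) : ℝ :=
  vphi ψ j₁ √(v 0 ^ 2 + v 1 ^ 2) * vphi ψ j₂ ‖v‖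

/-- A box containing the support of `velocityCutoff ψ j₁ j₂`; the factor `3 / 2` is the radius of
the support of `ψ`. -/
def velocityBox (j₁ j₂ : ℕ) : Set E3 :=
  coordBox ![3 / 2 * 2 ^ j₁, 3 / 2 * 2 ^ j₁, 3 / 2 * 2 ^ j₂]

theorem volume_real_velocityBox (j₁ j₂ : ℕ) :
    volume.real (velocityBox j₁ j₂) = 27 * ((2 ^ j₁) ^ 2 * 2 ^ j₂) := by
  have half_sides_nonneg :
      ∀ i, (0 : ℝ) ≤ ![3 / 2 * 2 ^ j₁, 3 / 2 * 2 ^ j₁, 3 / 2 * 2 ^ j₂] i := by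
    simp [Fin.forall_fin_succ]
  rw [velocityBox, volume_real_coordBox half_sides_nonneg, Fin.prod_univ_three]
  simp only [Matrix.cons_val]
  ring

theorem support_velocityCutoff_subset (hsupp : Function.support ψ ⊆ Icc (-(3 / 2)) (3 / 2))
    (j₁ j₂ : ℕ) : Function.support (velocityCutoff ψ j₁ j₂) ⊆ velocityBox j₁ j₂ := by
  intro v hv
  have planar : √(v 0 ^ 2 + v 1 ^ 2) ≤ 3 / 2 * 2 ^ j₁ := by
    simpa only [abs_of_nonneg (sqrt_nonneg _)] using
      abs_le_of_vphi_ne_zero hsupp (left_ne_zero_of_mul hv)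
  have full : ‖v‖ ≤ 3 / 2 * 2 ^ j₂ := by
    simpa only [abs_norm] using abs_le_of_vphi_ne_zero hsupp (right_ne_zero_of_mul hv)
  intro i
  fin_cases i
  · exact (abs_le_sqrt (le_add_of_nonneg_right (sq_nonneg _))).trans planar
  · exact (abs_le_sqrt (le_add_of_nonneg_left (sq_nonneg _))).trans planar
  · exact (PiLp.norm_apply_le v 2).trans full

theorem abs_velocityCutoff_le_indicator (hψ : ∀ r, ψ r ∈ Icc (0 : ℝ) 1)
    (hsupp : Function.support ψ ⊆ Icc (-(3 / 2)) (3 / 2)) (j₁ j₂ : ℕ) (v : E3) :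
    |velocityCutoff ψ j₁ j₂ v| ≤ (velocityBox j₁ j₂).indicator 1 v := by
  by_cases hv : v ∈ velocityBox j₁ j₂
  · rw [indicator_of_mem hv, Pi.one_apply, velocityCutoff, abs_mul]
    exact mul_le_one₀ (abs_vphi_le_one hψ _ _) (abs_nonneg _) (abs_vphi_le_one hψ _ _)
  · have outside : velocityCutoff ψ j₁ j₂ v = 0 :=
      Function.notMem_support.1 fun h => hv (support_velocityCutoff_subset hsupp j₁ j₂ h)
    rw [indicator_of_notMem hv, outside, abs_zero]

theorem abs_velocityCutoff_le_rpow (hψ : ∀ r, ψ r ∈ Icc (0 : ℝ) 1)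
    (hone : ∀ r : ℝ, |r| ≤ 5 / 4 → ψ r = 1) {m : ℝ} (hm : 0 ≤ m) (j₁ j₂ : ℕ) (v : E3) :
    |velocityCutoff ψ j₁ j₂ v| ≤ 2 ^ m * 2 ^ (-(m * j₂)) * (1 + ‖v‖) ^ m := by
  rw [velocityCutoff, abs_mul]
  refine (mul_le_of_le_one_left (abs_nonneg _) (abs_vphi_le_one hψ _ _)).trans ?_
  simpa only [abs_norm] using abs_vphi_le_rpow hψ hone hm j₂ ‖v‖

end VelocityCutoff

section Kernel

variable {X : Type*} [NormedAddCommGroup X] [NormedSpace ℝ X] [FiniteDimensional ℝ X]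
  [MeasurableSpace X] [BorelSpace X] (μ : Measure X) [μ.IsAddHaarMeasure] {N : ℕ} {c : ℝ}

theorem integrable_inv_one_add_mul_norm_pow (hN : Module.finrank ℝ X < N) (hc : 0 < c) :
    Integrable (fun y : X => ((1 + c * ‖y‖) ^ N)⁻¹) μ := by
  have unscaled : Integrable (fun y : X => ((1 + ‖y‖) ^ N)⁻¹) μ := by
    refine (integrable_one_add_norm (r := N) (Nat.cast_lt.2 hN)).congr (.of_forall fun y => ?_)
    simp only [rpow_neg (by positivity : 0 ≤ 1 + ‖y‖), rpow_natCast]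
  simpa only [norm_smul, norm_of_nonneg hc.le] using unscaled.comp_smul hc.ne'

theorem integral_inv_one_add_mul_norm_pow (hc : 0 ≤ c) :
    ∫ y : X, ((1 + c * ‖y‖) ^ N)⁻¹ ∂μ =
      (c ^ Module.finrank ℝ X)⁻¹ * ∫ y : X, ((1 + ‖y‖) ^ N)⁻¹ ∂μ := by
  simpa only [norm_smul, norm_of_nonneg hc, smul_eq_mul] using
    Measure.integral_comp_smul_of_nonneg μ (fun y : X => ((1 + ‖y‖) ^ N)⁻¹) c (hR := hc)

end Kernel

section Field

/-- The field `x ↦ ∬ K(y) f(x - y, v) w(v) dy dv` generated through the kernel `K` by the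
distribution `f` of positions and velocities, weighted by `w` in the velocity variable. -/
def localizedField {X V F : Type*} [MeasureSpace X] [AddGroup X] [MeasureSpace V]
    [NormedAddCommGroup F] [NormedSpace ℝ F] (f : X → V → ℝ) (w : V → ℝ) (K : X → F) (x : X) : F :=
  ∫ p : X × V, (f (x - p.1) p.2 * w p.2) • K p.1

variable {X V F : Type*} [MeasureSpace X] [AddGroup X] [MeasurableAdd X] [MeasurableNeg X]
  [(volume : Measure X).IsAddLeftInvariant] [(volume : Measure X).IsNegInvariant]
  [SFinite (volume : Measure X)] [MeasureSpace V] [SFinite (volume : Measure V)]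
  [NormedAddCommGroup F] [NormedSpace ℝ F] {f : X → V → ℝ} {w : V → ℝ} {K : X → F}

theorem measurePreserving_subLeft_prodCongr_refl (x : X) :
    MeasurePreserving ((MeasurableEquiv.subLeft x).prodCongr (.refl V)) :=
  (Measure.measurePreserving_sub_left (volume : Measure X) x).prod (.id volume)

theorem norm_localizedField_le_of_norm_kernel_le {B : ℝ} {g : V → ℝ} (hf : ∀ x v, 0 ≤ f x v)
    (hgf : Integrable fun p : X × V => g p.2 * f p.1 p.2) (hw : ∀ v, |w v| ≤ g v)
    (hK : ∀ y, ‖K y‖ ≤ B) (x : X) :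
    ‖localizedField f w K x‖ ≤ B * ∫ p : X × V, g p.2 * f p.1 p.2 := by
  have shift := measurePreserving_subLeft_prodCongr_refl (V := V) x
  rw [← shift.integral_comp', ← integral_const_mul]
  refine norm_integral_le_of_norm_le ((shift.integrable_comp_of_integrable hgf).const_mul B)
    (.of_forall fun p => ?_)
  have hfp : 0 ≤ f (x - p.1) p.2 := hf _ _
  calc ‖(f (x - p.1) p.2 * w p.2) • K p.1‖ = f (x - p.1) p.2 * |w p.2| * ‖K p.1‖ := by
        rw [norm_smul, norm_mul, norm_of_nonneg hfp, norm_eq_abs]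
    _ ≤ f (x - p.1) p.2 * g p.2 * B := by
        have := (abs_nonneg _).trans (hw p.2)
        gcongr
        · exact hw _
        · exact hK _
    _ = B * (g p.2 * f (x - p.1) p.2) := by ring

theorem norm_localizedField_le_of_ae_abs_le {A : ℝ} {κ : X → ℝ} {g : V → ℝ}
    (hA : ∀ᵐ p : X × V, |f p.1 p.2| ≤ A) (hκ : Integrable κ) (hK : ∀ y, ‖K y‖ ≤ κ y)
    (hg : Integrable g) (hw : ∀ v, |w v| ≤ g v) (x : X) :
    ‖localizedField f w K x‖ ≤ A * ((∫ y, κ y) * ∫ v, g v) := by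
  have majorant_integral : ∫ p : X × V, κ p.1 * g p.2 = (∫ y, κ y) * ∫ v, g v :=
    integral_prod_mul κ g
  rw [← majorant_integral, ← integral_const_mul]
  refine norm_integral_le_of_norm_le ((hκ.mul_prod hg).const_mul A) ?_
  filter_upwards [(measurePreserving_subLeft_prodCongr_refl x).quasiMeasurePreserving.ae hA]
    with p hp
  calc ‖(f (x - p.1) p.2 * w p.2) • K p.1‖ = |f (x - p.1) p.2| * |w p.2| * ‖K p.1‖ := by
        rw [norm_smul, norm_mul, norm_eq_abs, norm_eq_abs]
    _ ≤ A * g p.2 * κ p.1 := by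
        have := (abs_nonneg _).trans (hw p.2)
        have := (abs_nonneg _).trans hp
        gcongr
        · exact hp
        · exact hw _
        · exact hK _
    _ = A * (κ p.1 * g p.2) := by ring

theorem norm_localizedField_velocityCutoff_le_moment {ψ : ℝ → ℝ} (hψ : ∀ r, ψ r ∈ Icc (0 : ℝ) 1)
    (hone : ∀ r : ℝ, |r| ≤ 5 / 4 → ψ r = 1) {f : X → E3 → ℝ} (hf : ∀ x v, 0 ≤ f x v)
    {m : ℝ} (hm : 0 ≤ m) (hfm : Integrable fun p : X × E3 => (1 + ‖p.2‖) ^ m * f p.1 p.2)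
    {B : ℝ} (hK : ∀ y, ‖K y‖ ≤ B) (j₁ j₂ : ℕ) (x : X) :
    ‖localizedField f (velocityCutoff ψ j₁ j₂) K x‖ ≤
      2 ^ m * (B * 2 ^ (-(m * j₂)) * ∫ p : X × E3, (1 + ‖p.2‖) ^ m * f p.1 p.2) := by
  have weighted := norm_localizedField_le_of_norm_kernel_le hf
    (by simpa only [mul_assoc] using hfm.const_mul (2 ^ m * 2 ^ (-(m * j₂))))
    (abs_velocityCutoff_le_rpow hψ hone hm j₁ j₂) hK x
  simp only [mul_assoc, integral_const_mul] at weighted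
  linarith

theorem norm_localizedField_velocityCutoff_le_first_moment {ψ : ℝ → ℝ}
    (hψ : ∀ r, ψ r ∈ Icc (0 : ℝ) 1) (hone : ∀ r : ℝ, |r| ≤ 5 / 4 → ψ r = 1) {f : X → E3 → ℝ}
    (hf : ∀ x v, 0 ≤ f x v) (hf₁ : Integrable fun p : X × E3 => (1 + ‖p.2‖) * f p.1 p.2)
    {B : ℝ} (hK : ∀ y, ‖K y‖ ≤ B) (j₁ j₂ : ℕ) (x : X) :
    ‖localizedField f (velocityCutoff ψ j₁ j₂) K x‖ ≤
      2 * (B / 2 ^ j₂ * ∫ p : X × E3, (1 + ‖p.2‖) * f p.1 p.2) := by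
  simpa only [rpow_one, one_mul, rpow_neg zero_le_two, rpow_natCast, div_eq_mul_inv] using
    norm_localizedField_velocityCutoff_le_moment hψ hone hf zero_le_one
      (by simpa only [rpow_one] using hf₁) hK j₁ j₂ x

end Field

theorem norm_localizedField_velocityCutoff_le_sup {X F : Type*} [NormedAddCommGroup X]
    [NormedSpace ℝ X] [FiniteDimensional ℝ X] [MeasureSpace X] [BorelSpace X]
    [(volume : Measure X).IsAddHaarMeasure] [NormedAddCommGroup F] [NormedSpace ℝ F]
    {ψ : ℝ → ℝ} (hψ : ∀ r, ψ r ∈ Icc (0 : ℝ) 1)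
    (hsupp : Function.support ψ ⊆ Icc (-(3 / 2)) (3 / 2)) {f : X → E3 → ℝ} {A : ℝ}
    (hA : ∀ᵐ p : X × E3, |f p.1 p.2| ≤ A) {N : ℕ} (hN : Module.finrank ℝ X < N) {B c : ℝ}
    (hc : 0 < c) {K : X → F} (hK : ∀ y, ‖K y‖ ≤ B * ((1 + c * ‖y‖) ^ N)⁻¹) (j₁ j₂ : ℕ) (x : X) :
    ‖localizedField f (velocityCutoff ψ j₁ j₂) K x‖ ≤
      27 * (∫ y : X, ((1 + ‖y‖) ^ N)⁻¹) *
        (A * (B * (c ^ Module.finrank ℝ X)⁻¹ * ((2 ^ j₁) ^ 2 * 2 ^ j₂))) := by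
  have box_measurable : MeasurableSet (velocityBox j₁ j₂) := measurableSet_coordBox _
  have box_integrable : Integrable ((velocityBox j₁ j₂).indicator (1 : E3 → ℝ)) :=
    (integrable_indicator_iff box_measurable).2 (integrableOn_const (volume_coordBox_ne_top _))
  have kernel_integrable := (integrable_inv_one_add_mul_norm_pow volume hN hc).const_mul B
  refine (norm_localizedField_le_of_ae_abs_le hA kernel_integrable hK box_integrable
    (abs_velocityCutoff_le_indicator hψ hsupp j₁ j₂) x).trans_eq ?_
  rw [integral_const_mul, integral_inv_one_add_mul_norm_pow volume hc.le,
    integral_indicator_one box_measurable, volume_real_velocityBox]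
  ring

theorem mul_inv_one_add_mul_norm_pow_le {X : Type*} [SeminormedAddCommGroup X] {B c : ℝ}
    (hB : 0 ≤ B) (hc : 0 ≤ c) (N : ℕ) (y : X) : B * ((1 + c * ‖y‖) ^ N)⁻¹ ≤ B :=
  mul_le_of_le_one_right hB <| inv_le_one_of_one_le₀ <| one_le_pow₀ <|
    le_add_of_nonneg_right (by positivity)

theorem two_zpow_mul_inv_pow_three_mul (k : ℤ) (j₁ j₂ : ℕ) :
    (2 : ℝ) ^ (2 * k) * (((2 : ℝ) ^ k) ^ 3)⁻¹ * ((2 ^ j₁) ^ 2 * 2 ^ j₂) =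
      2 ^ (-k + 2 * (j₁ : ℤ) + (j₂ : ℤ)) := by
  rw [zpow_add₀ two_ne_zero, zpow_add₀ two_ne_zero, zpow_neg, mul_comm 2 k, mul_comm 2 (j₁ : ℤ),
    zpow_mul, zpow_mul, zpow_natCast, zpow_natCast, zpow_ofNat, zpow_ofNat]
  field_simp

theorem localized_field_bound_general {n : ℝ} (hn : 0 ≤ n) {N : ℕ} (hN : 3 < N) :
    ∃ C : ℝ, ∀ ψ : ℝ → ℝ, Measurable ψ → (∀ r, ψ r ∈ Icc (0 : ℝ) 1) →
      Function.support ψ ⊆ Icc (-(3 / 2)) (3 / 2) → (∀ r : ℝ, |r| ≤ 5 / 4 → ψ r = 1) →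
      ∀ f : E3 → E3 → ℝ, (∀ x v, 0 ≤ f x v) →
        ∀ A > (0 : ℝ), (∀ᵐ p : E3 × E3, f p.1 p.2 ≤ A) →
        Integrable (fun p : E3 × E3 => (1 + ‖p.2‖) * f p.1 p.2) →
        Integrable (fun p : E3 × E3 => (1 + ‖p.2‖) ^ n * f p.1 p.2) →
        ∀ (k : ℤ) (j₁ j₂ : ℕ) (K : E3 → E3),
          (∀ y, ‖K y‖ ≤ (2 : ℝ) ^ (2 * k) * ((1 + (2 : ℝ) ^ k * ‖y‖) ^ N)⁻¹) →
          ∀ x : E3, ‖localizedField f (velocityCutoff ψ j₁ j₂) K x‖ ≤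
            C * min (A * (2 : ℝ) ^ (-k + 2 * (j₁ : ℤ) + (j₂ : ℤ)))
              (min ((2 : ℝ) ^ (2 * k - (j₂ : ℤ)) * ∫ p : E3 × E3, (1 + ‖p.2‖) * f p.1 p.2)
                ((2 : ℝ) ^ (2 * k) * (2 : ℝ) ^ (-(n * (j₂ : ℝ))) *
                  ∫ p : E3 × E3, (1 + ‖p.2‖) ^ n * f p.1 p.2)) := by
  set I := ∫ y : E3, ((1 + ‖y‖) ^ N)⁻¹
  have hI : 0 ≤ I := integral_nonneg fun y => by positivity
  refine ⟨27 * I + 2 + 2 ^ n, ?_⟩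
  intro ψ _ hψ hsupp hone f hf A hA₀ hA hf₁ hfn k j₁ j₂ K hK x
  have kernel_le (y : E3) : ‖K y‖ ≤ 2 ^ (2 * k) :=
    (hK y).trans (mul_inv_one_add_mul_norm_pow_le (by positivity) (by positivity) N y)
  have sup_bound := norm_localizedField_velocityCutoff_le_sup hψ hsupp
    (hA.mono fun p hp => (abs_of_nonneg (hf _ _)).trans_le hp) (by simpa using hN) (by positivity)
    hK j₁ j₂ x
  rw [finrank_euclideanSpace_fin, two_zpow_mul_inv_pow_three_mul] at sup_bound
  have first_moment_bound :=
    norm_localizedField_velocityCutoff_le_first_moment hψ hone hf hf₁ kernel_le j₁ j₂ x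
  rw [← zpow_natCast, ← zpow_sub₀ two_ne_zero] at first_moment_bound
  have moment_bound :=
    norm_localizedField_velocityCutoff_le_moment hψ hone hf hn hfn kernel_le j₁ j₂ x
  have first_moment_nonneg : 0 ≤ ∫ p : E3 × E3, (1 + ‖p.2‖) * f p.1 p.2 :=
    integral_nonneg fun p => mul_nonneg (by positivity) (hf _ _)
  have moment_nonneg : 0 ≤ ∫ p : E3 × E3, (1 + ‖p.2‖) ^ n * f p.1 p.2 :=
    integral_nonneg fun p => mul_nonneg (by positivity) (hf _ _)
  have two_rpow_nonneg : (0 : ℝ) ≤ 2 ^ n := by positivity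
  rw [mul_min_of_nonneg _ _ (by positivity), mul_min_of_nonneg _ _ (by positivity)]
  exact le_min (sup_bound.trans (by gcongr; linarith)) <|
    le_min (first_moment_bound.trans (by gcongr; linarith))
      (moment_bound.trans (by gcongr; linarith))

/-- Bounds for the frequency- and velocity-localized electric field
`E(x) = ∬ K(y) f(x-y,v) φ_{j₁}(v̸) φ_{j₂}(v) dy dv`:
`|E(x)| ≤ C min{A 2^{-k+2j₁+j₂}, 2^{2k-j₂} M₁, 2^{2k-n j₂} M_n}`. -/
theorem localized_field_bound (n : ℝ) (hn : 1 < n) :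
    ∃ C : ℝ, ∀ ψ : ℝ → ℝ, ContDiff ℝ (⊤ : ℕ∞) ψ → (∀ r, ψ (-r) = ψ r) →
      (∀ r, ψ r ∈ Set.Icc (0 : ℝ) 1) →
      Function.support ψ ⊆ Set.Icc (-(3 / 2)) (3 / 2) →
      (∀ r : ℝ, |r| ≤ 5 / 4 → ψ r = 1) →
      ∀ f : E3 → E3 → ℝ, Measurable (fun p : E3 × E3 => f p.1 p.2) →
        (∀ x v, 0 ≤ f x v) →
        ∀ A > (0 : ℝ), (∀ᵐ p : E3 × E3, f p.1 p.2 ≤ A) →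
        Integrable (fun p : E3 × E3 => (1 + ‖p.2‖) * f p.1 p.2) volume →
        Integrable (fun p : E3 × E3 => (1 + ‖p.2‖) ^ n * f p.1 p.2) volume →
        ∀ (k : ℤ) (j₁ j₂ : ℕ) (K : E3 → E3),
          (∀ y, ‖K y‖ ≤ (2 : ℝ) ^ (2 * k) * (((1 + (2 : ℝ) ^ k * ‖y‖) ^ (10 : ℕ)))⁻¹) →
          ∀ x : E3,
            ‖∫ p : E3 × E3,
                (f (x - p.1) p.2 * vphi ψ j₁ (Real.sqrt (p.2 0 ^ 2 + p.2 1 ^ 2)) *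
                  vphi ψ j₂ ‖p.2‖) • K p.1‖ ≤
              C * min (A * (2 : ℝ) ^ (-k + 2 * (j₁ : ℤ) + (j₂ : ℤ)))
                (min ((2 : ℝ) ^ (2 * k - (j₂ : ℤ)) *
                        ∫ p : E3 × E3, (1 + ‖p.2‖) * f p.1 p.2)
                     ((2 : ℝ) ^ (2 * k) * (2 : ℝ) ^ (-(n * (j₂ : ℝ))) *
                        ∫ p : E3 × E3, (1 + ‖p.2‖) ^ n * f p.1 p.2)) := by
  obtain ⟨C, hC⟩ := localized_field_bound_general (zero_le_one.trans hn.le) (N := 10) (by norm_num)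
  refine ⟨C, fun ψ hψ _ h01 hsupp hone f _ hf => ?_⟩
  simpa only [localizedField, velocityCutoff, mul_assoc] using
    hC ψ hψ.continuous.measurable h01 hsupp hone f hf
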